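/- Let N ≥ 1, let δ be a real number, and let (μ_i)_{i≥0} be a real sequence. Define ν_i := μ_{i+1} + δ μ_i. Let τ_i := det(μ_{j+k})_{j,k=0}^{i−1}, τ'_i := det(μ_{j+k+1})_{j,k=0}^{i−1}, σ_i := det(ν_{j+k})_{j,k=0}^{i−1} (each equal to 1 when i = 0), and assume τ_i ≠ 0, τ'_i ≠ 0, σ_i ≠ 0 for i = 1,…,N. Define Q_i := τ_{i−1} τ'_i / (τ_i τ'_{i−1}), Q̄_i := τ_{i−1} σ_i / (τ_i σ_{i−1}) for 1 ≤ i ≤ N, and E_i := τ_{i+1} τ'_{i−1} / (τ_i τ'_i), Ē_i := τ_{i+1} σ_{i−1} / (τ_i σ_i) for 1 ≤ i ≤ N−1, with E_0 := 0 and Ē_0 := 0. Then: Q̄_i + Ē_{i−1} − δ = Q_i + E_{i−1} for i = 1,…,N, and Q̄_i Ē_i = Q_i E_i for i = 1,…,N−1. -/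

import Mathlib

open Finset

/-- Hankel determinant τ_i of a moment sequence. -/
noncomputable def hank (μ : ℕ → ℝ) (i : ℕ) : ℝ :=
  Matrix.det (Matrix.of fun j k : Fin i => μ (j.1 + k.1))

/-- The shifted moment sequence ν_i := μ_{i+1} + δ μ_i. -/
noncomputable def nuSeq (δ : ℝ) (μ : ℕ → ℝ) : ℕ → ℝ :=
  fun m => μ (m + 1) + δ * μ m

/-- Q_i := τ_{i−1} τ'_i / (τ_i τ'_{i−1}). -/
noncomputable def Qd (μ : ℕ → ℝ) (i : ℕ) : ℝ :=
  hank μ (i - 1) * hank (fun m => μ (m + 1)) i /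
    (hank μ i * hank (fun m => μ (m + 1)) (i - 1))

/-- E_i := τ_{i+1} τ'_{i−1} / (τ_i τ'_i), with E_0 = 0. -/
noncomputable def Ed (μ : ℕ → ℝ) (i : ℕ) : ℝ :=
  if i = 0 then 0 else
    hank μ (i + 1) * hank (fun m => μ (m + 1)) (i - 1) /
      (hank μ i * hank (fun m => μ (m + 1)) i)

/-- Q̄_i := τ_{i−1} σ_i / (τ_i σ_{i−1}). -/
noncomputable def Qbar (δ : ℝ) (μ : ℕ → ℝ) (i : ℕ) : ℝ :=
  hank μ (i - 1) * hank (nuSeq δ μ) i / (hank μ i * hank (nuSeq δ μ) (i - 1))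

/-- Ē_i := τ_{i+1} σ_{i−1} / (τ_i σ_i), with Ē_0 = 0. -/
noncomputable def Ebar (δ : ℝ) (μ : ℕ → ℝ) (i : ℕ) : ℝ :=
  if i = 0 then 0 else
    hank μ (i + 1) * hank (nuSeq δ μ) (i - 1) / (hank μ i * hank (nuSeq δ μ) i)

open Polynomial in
/-- Orthogonal polynomial of degree n, as a bordered Hankel determinant. -/
noncomputable def DD (μ : ℕ → ℝ) (n : ℕ) : ℝ[X] :=
  ∑ k : Fin (n + 1), ((-1 : ℝ) ^ (n + k.1) *
    Matrix.det (Matrix.of fun j l : Fin n => μ (j.1 + (k.succAbove l).1))) • (X : ℝ[X]) ^ k.1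

open Polynomial in
/-- moment functional -/
noncomputable def LL (μ : ℕ → ℝ) : ℝ[X] →ₗ[ℝ] ℝ :=
  Polynomial.lsum (fun k => (LinearMap.id (R := ℝ) (M := ℝ)).smulRight (μ k))

open Polynomial in
lemma LL_X (μ : ℕ → ℝ) (k : ℕ) : LL μ (X ^ k) = μ k := by
  rw [X_pow_eq_monomial]
  simp [LL, Polynomial.lsum_apply, Polynomial.sum_monomial_index]

open Polynomial in
lemma DD_apply (μ : ℕ → ℝ) (n : ℕ) (φ : ℝ[X] →ₗ[ℝ] ℝ) :
    φ (DD μ n) = Matrix.det (Matrix.of fun j k : Fin (n + 1) =>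
      if j.1 < n then μ (j.1 + k.1) else φ (X ^ k.1)) := by
  rw [Matrix.det_succ_row _ (Fin.last n)]
  simp only [DD, map_sum, map_smul, smul_eq_mul]
  refine Finset.sum_congr rfl fun k _ => ?_
  have : (Matrix.of fun j k : Fin (n + 1) =>
      if j.1 < n then μ (j.1 + k.1) else φ (X ^ k.1)).submatrix (Fin.last n).succAbove k.succAbove
      = Matrix.of fun j l : Fin n => μ (j.1 + (k.succAbove l).1) := by
    ext j l
    simp
  rw [this]
  simp
  ring

open Polynomial in
lemma LL_DD (μ : ℕ → ℝ) (n m : ℕ) :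
    LL μ (X ^ m * DD μ n) = Matrix.det (Matrix.of fun j k : Fin (n + 1) =>
      if j.1 < n then μ (j.1 + k.1) else μ (m + k.1)) := by
  have := DD_apply μ n (LL μ ∘ₗ LinearMap.mulLeft ℝ (X ^ m))
  simpa [← pow_add, LL_X] using this

open Polynomial in
lemma LL_DD_lt (μ : ℕ → ℝ) (n m : ℕ) (h : m < n) : LL μ (X ^ m * DD μ n) = 0 := by
  rw [LL_DD]
  apply Matrix.det_zero_of_row_eq (i := ⟨m, by omega⟩) (j := Fin.last n)
  · intro h'
    have := congrArg Fin.val h'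
    simp at this
    omega
  · ext k
    simp [h]

open Polynomial in
lemma LL_DD_eq (μ : ℕ → ℝ) (n : ℕ) : LL μ (X ^ n * DD μ n) = hank μ (n + 1) := by
  rw [LL_DD, hank]
  congr 1
  ext j k
  simp only [Matrix.of_apply]
  split_ifs with h
  · rfl
  · have : j.1 = n := by omega
    rw [this]

lemma DD_coeff (μ : ℕ → ℝ) (n : ℕ) : (DD μ n).coeff n = hank μ n := by
  rw [DD, Polynomial.finsetSum_coeff, Finset.sum_eq_single (Fin.last n)]
  · simp [hank, ← two_mul]
  · intro b _ hb
    have : n ≠ b.1 := fun h => hb (Fin.ext h.symm)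
    simp [Polynomial.coeff_X_pow, this]
  · simp

lemma DD_coeff_gt (μ : ℕ → ℝ) (n m : ℕ) (h : n < m) : (DD μ n).coeff m = 0 := by
  rw [DD, Polynomial.finsetSum_coeff]
  refine Finset.sum_eq_zero fun b _ => ?_
  have : m ≠ b.1 := by omega
  simp [Polynomial.coeff_X_pow, this]

lemma DD_eval (μ : ℕ → ℝ) (n : ℕ) (δ : ℝ) :
    (DD μ n).eval (-δ) = (-1) ^ n * hank (nuSeq δ μ) n := by
  have h := DD_apply μ n (Polynomial.leval (-δ))
  simp only [Polynomial.leval_apply, Polynomial.eval_pow, Polynomial.eval_X] at h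
  rw [h]
  rw [Matrix.det_eq_of_forall_col_eq_smul_add_pred (n := n)
    (B := Matrix.of fun j k : Fin (n + 1) => if j.1 < n then
      (if k.1 = 0 then μ j.1 else nuSeq δ μ (j.1 + (k.1 - 1)))
      else (if k.1 = 0 then 1 else 0)) (fun _ => -δ)]
  · rw [Matrix.det_succ_row _ (Fin.last n), Finset.sum_eq_single 0]
    · simp [hank, Matrix.submatrix, Fin.succAbove_zero]
    · intro b _ hb
      have : b.1 ≠ 0 := fun h => hb (Fin.ext h)
      simp [hb]
    · simp
  · intro i
    simp
  · intro i j
    by_cases hi : i.1 < n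
    · simp [hi, nuSeq, add_assoc]
    · simp [hi, pow_succ, mul_comm]

open Polynomial in
lemma uniq (μ : ℕ → ℝ) (n : ℕ) (hn : hank μ n ≠ 0) (p : ℝ[X])
    (hp : ∀ m, n ≤ m → p.coeff m = 0) (hL : ∀ k, k < n → LL μ (X ^ k * p) = 0) : p = 0 := by
  have hv : (fun i : Fin n => p.coeff i.1) = 0 := by
    apply Matrix.eq_zero_of_mulVec_eq_zero hn
    ext j
    have hd : p = ∑ k ∈ Finset.range n, p.coeff k • (X : ℝ[X]) ^ k := by
      ext m
      simp only [finsetSum_coeff, coeff_smul, coeff_X_pow, smul_eq_mul]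
      by_cases hm : m < n
      · simp [hm]
      · rw [hp m (by omega)]
        simp [hm]
    have := hL j.1 j.2
    rw [hd, Finset.mul_sum, map_sum, Finset.sum_range] at this
    rw [Matrix.mulVec, dotProduct]
    simp only [mul_smul_comm, ← pow_add, map_smul, LL_X, smul_eq_mul] at this
    simp only [Matrix.of_apply, Pi.zero_apply]
    rw [← this]
    exact Finset.sum_congr rfl fun _ _ => mul_comm _ _
  ext m
  by_cases hm : m < n
  · simpa using congrFun hv ⟨m, hm⟩
  · simpa using hp m (by omega)

open Polynomial in
lemma three_term (μ : ℕ → ℝ) (m : ℕ) (h1 : hank μ (m + 1) ≠ 0) (h2 : hank μ (m + 2) ≠ 0) :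
    ∃ a : ℝ, ∀ x : ℝ, (hank μ (m + 1))⁻¹ * (x * (DD μ (m + 1)).eval x) =
      (hank μ (m + 2))⁻¹ * (DD μ (m + 2)).eval x
      + a * (DD μ (m + 1)).eval x
      + hank μ (m + 2) / hank μ (m + 1) ^ 2 * (DD μ m).eval x := by
  obtain ⟨R, hR⟩ : ∃ R : ℝ[X], R = (hank μ (m + 1))⁻¹ • (X * DD μ (m + 1))
    - (hank μ (m + 2))⁻¹ • DD μ (m + 2)
    - (hank μ (m + 2) / hank μ (m + 1) ^ 2) • DD μ m := ⟨_, rfl⟩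
  have key : R - (R.coeff (m + 1) / hank μ (m + 1)) • DD μ (m + 1) = 0 := by
    apply uniq μ (m + 1) h1
    · intro k hk
      rcases Nat.eq_or_lt_of_le hk with rfl | hk
      · simp [DD_coeff, h1]
      · obtain ⟨l, rfl⟩ : ∃ l, k = l + 1 := ⟨k - 1, by omega⟩
        have hRk : R.coeff (l + 1) = 0 := by
          rw [hR]
          simp only [coeff_sub, coeff_smul, coeff_X_mul, smul_eq_mul]
          rw [DD_coeff_gt μ m (l + 1) (by omega)]
          rcases Nat.eq_or_lt_of_le hk with h | h
          · obtain rfl : l = m + 1 := by omega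
            rw [DD_coeff, show m + 1 + 1 = m + 2 from rfl, DD_coeff]
            simp [h1, h2]
          · rw [DD_coeff_gt μ _ l (by omega), DD_coeff_gt μ _ (l + 1) (by omega)]
            simp
        rw [coeff_sub, hRk, coeff_smul, DD_coeff_gt μ _ _ hk]
        simp
    · intro k hk
      have e : X ^ k * (X * DD μ (m + 1)) = X ^ (k + 1) * DD μ (m + 1) := by ring
      rw [mul_sub, map_sub, mul_smul_comm, map_smul, LL_DD_lt μ _ k hk, hR]
      simp only [mul_sub, map_sub, mul_smul_comm, map_smul, e, smul_eq_mul]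
      rw [LL_DD_lt μ (m + 2) k (by omega)]
      by_cases h : k = m
      · subst h
        rw [LL_DD_eq, LL_DD_eq]
        field_simp
        ring
      · rw [LL_DD_lt μ _ _ (by omega), LL_DD_lt μ m k (by omega)]
        simp
  refine ⟨R.coeff (m + 1) / hank μ (m + 1), fun x => ?_⟩
  generalize R.coeff (m + 1) / hank μ (m + 1) = a at key ⊢
  have := congrArg (Polynomial.eval x) key
  rw [hR] at this
  simp only [eval_sub, eval_smul, eval_mul, eval_X, smul_eq_mul, eval_zero] at this
  linarith

lemma hank_zero (μ : ℕ → ℝ) : hank μ 0 = 1 := by simp [hank]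

lemma hank_one (μ : ℕ → ℝ) : hank μ 1 = μ 0 := by simp [hank]

lemma nuSeq_zero (μ : ℕ → ℝ) : nuSeq 0 μ = fun m => μ (m + 1) := by
  funext m; simp [nuSeq]

lemma Qbar_zero (μ : ℕ → ℝ) (i : ℕ) : Qbar 0 μ i = Qd μ i := by
  simp only [Qbar, Qd, nuSeq_zero]

lemma Ebar_zero (μ : ℕ → ℝ) (i : ℕ) : Ebar 0 μ i = Ed μ i := by
  simp only [Ebar, Ed, nuSeq_zero]

lemma const_sum (μ : ℕ → ℝ) (m : ℕ) (h1 : hank μ (m + 1) ≠ 0) (h2 : hank μ (m + 2) ≠ 0) :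
    ∃ a : ℝ, ∀ δ : ℝ, hank (nuSeq δ μ) (m + 1) ≠ 0 →
      Qbar δ μ (m + 2) + Ebar δ μ (m + 1) - δ = a := by
  obtain ⟨a, ha⟩ := three_term μ m h1 h2
  refine ⟨a * hank μ (m + 1), fun δ hs => ?_⟩
  have := ha (-δ)
  simp only [DD_eval] at this
  have hp : ((-1 : ℝ) ^ m) ≠ 0 := by simp
  have h3 : -(hank μ (m + 1))⁻¹ * (-δ * hank (nuSeq δ μ) (m + 1)) =
      (hank μ (m + 2))⁻¹ * hank (nuSeq δ μ) (m + 2)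
      - a * hank (nuSeq δ μ) (m + 1)
      + hank μ (m + 2) / hank μ (m + 1) ^ 2 * hank (nuSeq δ μ) m := by
    apply mul_left_cancel₀ hp
    rw [pow_succ, pow_add] at this
    linear_combination this
  simp only [Qbar, Ebar, Nat.add_sub_cancel, show m + 2 - 1 = m + 1 from rfl,
    show m + 1 + 1 = m + 2 from rfl, if_neg (Nat.succ_ne_zero m)]
  field_simp at h3 ⊢
  linear_combination -h3

theorem stmt7 (N : ℕ) (hN : 1 ≤ N) (δ : ℝ) (μ : ℕ → ℝ)
    (hτ : ∀ i, 1 ≤ i → i ≤ N → hank μ i ≠ 0)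
    (hτ' : ∀ i, 1 ≤ i → i ≤ N → hank (fun m => μ (m + 1)) i ≠ 0)
    (hσ : ∀ i, 1 ≤ i → i ≤ N → hank (nuSeq δ μ) i ≠ 0) :
    (∀ i, 1 ≤ i → i ≤ N →
      Qbar δ μ i + Ebar δ μ (i - 1) - δ = Qd μ i + Ed μ (i - 1)) ∧
    (∀ i, 1 ≤ i → i ≤ N - 1 →
      Qbar δ μ i * Ebar δ μ i = Qd μ i * Ed μ i) := by
  have triv : ∀ (s : ℕ → ℝ) (i : ℕ), hank s i ≠ 0 → hank s (i - 1) ≠ 0 →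
      hank μ (i - 1) * hank s i / (hank μ i * hank s (i - 1)) *
        (hank μ (i + 1) * hank s (i - 1) / (hank μ i * hank s i)) =
      hank μ (i - 1) * hank μ (i + 1) / (hank μ i * hank μ i) := by
    intro s i h1 h2
    rw [div_mul_div_comm, ← mul_div_mul_right _ (hank μ i * hank μ i) (mul_ne_zero h1 h2)]
    congr 1 <;> ring
  have nz : ∀ s : ℕ → ℝ, (∀ i, 1 ≤ i → i ≤ N → hank s i ≠ 0) →
      ∀ i, i ≤ N → hank s i ≠ 0 := by
    intro s h i hi
    rcases Nat.eq_zero_or_pos i with rfl | h0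
    · simp [hank_zero]
    · exact h i h0 hi
  have nτ := nz _ hτ
  have nτ' := nz _ hτ'
  have nσ := nz _ hσ
  refine ⟨fun i hi hiN => ?_, fun i hi hiN => ?_⟩
  · rcases Nat.eq_or_lt_of_le hi with rfl | hi
    · have := nτ 1 hiN
      simp only [Qbar, Ebar, Qd, Ed, Nat.sub_self, hank_zero, hank_one, nuSeq] at this ⊢
      simp
      field_simp
      ring
    · obtain ⟨m, rfl⟩ : ∃ m, i = m + 2 := ⟨i - 2, by omega⟩
      obtain ⟨a, ha⟩ := const_sum μ m (nτ _ (by omega)) (nτ _ hiN)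
      have e1 := ha δ (nσ _ (by omega))
      have e2 := ha 0 (by rw [nuSeq_zero]; exact nτ' _ (by omega))
      rw [Qbar_zero, Ebar_zero, sub_zero] at e2
      rw [show m + 2 - 1 = m + 1 from rfl, e1, e2]
  · have h0 : i ≠ 0 := by omega
    simp only [Qbar, Ebar, Qd, Ed, if_neg h0]
    rw [triv _ _ (nσ _ (by omega)) (nσ _ (by omega)),
      triv _ _ (nτ' _ (by omega)) (nτ' _ (by omega))]
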